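/- arXiv:1902.06546 — 3 statements merged into one kernel-verified Lean document; each statement's English description precedes it below -/
import Mathlib

section
/- Let k be a field, p a prime, and a, b, e natural numbers with 1 ≤ b ≤ a and e < p − 1. Then there do not exist k[[u]]-linear maps α : k[[u]]/(u^{pa}) → k[[u]]/(u^{a}) and ψ : k[[u]]/(u^{a}) → k[[u]]/(u^{pa}) such that the composite ψ ∘ α : k[[u]]/(u^{pa}) → k[[u]]/(u^{pa}) is multiplication by u^{eb}. -/
/-- let `k` be a field, `p` a prime, and `a, b, e` natural numbers with
`1 ≤ b ≤ a` and `e < p - 1`.  Then there are no `k⟦u⟧`-linear maps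
`α : k⟦u⟧/(u^{pa}) → k⟦u⟧/(u^a)` and `ψ : k⟦u⟧/(u^a) → k⟦u⟧/(u^{pa})` whose composite
`ψ ∘ α` is multiplication by `u^{eb}` on `k⟦u⟧/(u^{pa})`. -/
theorem statement3 (k : Type*) [Field k] (p : ℕ) (hp : p.Prime)
    (a b e : ℕ) (hb1 : 1 ≤ b) (hba : b ≤ a) (he : e < p - 1) :
    ¬ ∃ (α : (PowerSeries k ⧸ Ideal.span {(PowerSeries.X : PowerSeries k) ^ (p * a)})
          →ₗ[PowerSeries k]
          (PowerSeries k ⧸ Ideal.span {(PowerSeries.X : PowerSeries k) ^ a}))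
        (ψ : (PowerSeries k ⧸ Ideal.span {(PowerSeries.X : PowerSeries k) ^ a})
          →ₗ[PowerSeries k]
          (PowerSeries k ⧸ Ideal.span {(PowerSeries.X : PowerSeries k) ^ (p * a)})),
        ∀ z : PowerSeries k ⧸ Ideal.span {(PowerSeries.X : PowerSeries k) ^ (p * a)},
          ψ (α z) = (PowerSeries.X : PowerSeries k) ^ (e * b) • z := by
  rintro ⟨α, ψ, h⟩
  have h0 : ∀ w : PowerSeries k ⧸ Ideal.span {(PowerSeries.X : PowerSeries k) ^ a},
      (PowerSeries.X : PowerSeries k) ^ a • w = 0 := by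
    intro w
    obtain ⟨f, rfl⟩ := Ideal.Quotient.mk_surjective w
    change Ideal.Quotient.mk _ ((PowerSeries.X : PowerSeries k) ^ a * f) = 0
    rw [Ideal.Quotient.eq_zero_iff_mem, Ideal.mem_span_singleton]
    exact dvd_mul_right _ _
  have h1 := h (Ideal.Quotient.mk _ 1)
  have h2 : (PowerSeries.X : PowerSeries k) ^ a •
      ψ (α (Ideal.Quotient.mk _ 1)) = 0 := by
    rw [← map_smul, h0, map_zero]
  rw [h1] at h2
  change Ideal.Quotient.mk _ ((PowerSeries.X : PowerSeries k) ^ a *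
    ((PowerSeries.X : PowerSeries k) ^ (e * b) * 1)) = 0 at h2
  rw [Ideal.Quotient.eq_zero_iff_mem, Ideal.mem_span_singleton, mul_one, ← pow_add,
    pow_dvd_pow_iff PowerSeries.X_ne_zero PowerSeries.X_prime.not_unit] at h2
  have h3 : e * b ≤ e * a := Nat.mul_le_mul_left e hba
  have h4 : (e + 2) * a ≤ p * a := Nat.mul_le_mul_right a (by omega)
  nlinarith
end

section
/- Let k be a field of characteristic p > 0, and let A₀ be a k-algebra which is an integral domain. Fix an integer n ≥ 1 and a matrix B = (b_{ij}) ∈ M_{n×n}(A₀). Then there exists a nonzero element f ∈ A₀, depending only on B (not on C), such that for every column vector C = (c₁, …, cₙ) ∈ A₀ⁿ, the A₀-algebra A₁ := A₀[x₁, …, xₙ]/(x₁ − c₁ − Σⱼ b_{1j}xⱼᵖ, …, xₙ − cₙ − Σⱼ b_{nj}xⱼᵖ) parametrizing the solutions of the Artin–Schreier system x = B·x^{[p]} + C satisfies: A₁[1/f] is a finite étale A₀[1/f]-algebra (i.e., it is module-finite and étale over A₀[1/f]). -/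
open TensorProduct

/-- Pure-power elimination: if every `x i ^ p` is an affine combination of the `x j`, then the
`x i` are integral. -/
lemma as_integral_base {R S : Type*} [CommRing R] [CommRing S] [Algebra R S] {n p : ℕ}
    (hp : 2 ≤ p) (x : Fin n → S) (a : Fin n → Fin n → R) (c : Fin n → R)
    (h : ∀ i, x i ^ p = ∑ j, a i j • x j + algebraMap R S (c i)) (i₀ : Fin n) :
    IsIntegral R (x i₀) := by
  classical
  let m : (Fin n → ℕ) → S := fun s => ∏ i, x i ^ s i
  have m_add : ∀ s t, m (s + t) = m s * m t := fun s t => by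
    simp [m, pow_add, Finset.prod_mul_distrib]
  have m_single : ∀ i e, m (Pi.single i e) = x i ^ e := fun i e => by
    simp only [m]
    rw [Finset.prod_eq_single i]
    · simp
    · intro j _ hj; simp [hj]
    · simp
  have m_zero : m 0 = 1 := by simp [m]
  let N := n * (p - 1)
  let T : Set (Fin n → ℕ) := {s | ∑ i, s i ≤ N}
  have hT : T.Finite := by
    apply Set.Finite.subset (Fintype.piFinset fun _ : Fin n => Finset.range (N + 1)).finite_toSet
    intro s hs
    simp only [Finset.mem_coe, Fintype.mem_piFinset, Finset.mem_range]
    intro i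
    have : s i ≤ ∑ i, s i := Finset.single_le_sum (fun _ _ => Nat.zero_le _) (Finset.mem_univ i)
    have h2 : ∑ i, s i ≤ N := hs
    omega
  let M : Submodule R S := Submodule.span R (m '' T)
  have hM : M.FG := Submodule.fg_span (hT.image m)
  have key : ∀ d, ∀ s : Fin n → ℕ, ∑ i, s i = d → m s ∈ M := by
    intro d
    induction d using Nat.strong_induction_on with
    | _ d ih =>
      intro s hs
      by_cases hd : d ≤ N
      · exact Submodule.subset_span ⟨s, by simpa [T, hs] using hd, rfl⟩
      · have : ∃ i, p ≤ s i := by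
          by_contra! hcon
          have : ∑ i, s i ≤ ∑ _i : Fin n, (p - 1) :=
            Finset.sum_le_sum fun i _ => by have := hcon i; omega
          simp at this
          omega
        obtain ⟨i, hi⟩ := this
        obtain ⟨t, rfl⟩ : ∃ t : Fin n → ℕ, s = (Pi.single i p : Fin n → ℕ) + t := by
          refine ⟨s - Pi.single i p, ?_⟩
          funext j
          by_cases hj : j = i
          · subst hj
            simp only [Pi.add_apply, Pi.sub_apply, Pi.single_eq_same]
            omega
          · simp only [Pi.add_apply, Pi.sub_apply, Pi.single_eq_of_ne hj]
            omega
        have hsum : p + ∑ j, t j = d := by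
          rw [← hs]; simp [Finset.sum_add_distrib]
        rw [m_add, m_single, h, add_mul, Finset.sum_mul]
        refine M.add_mem (M.sum_mem fun j _ => ?_) ?_
        · rw [smul_mul_assoc, ← pow_one (x j), ← m_single, ← m_add]
          refine M.smul_mem _ (ih (1 + ∑ j, t j) (by omega) _ ?_)
          simp [Finset.sum_add_distrib]
        · rw [← Algebra.smul_def]
          exact M.smul_mem _ (ih _ (by omega) _ rfl)
  have hmul : ∀ y ∈ M, ∀ z ∈ M, y * z ∈ M := by
    intro y hy z hz
    induction hy using Submodule.span_induction with
    | mem y hy =>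
      obtain ⟨s, -, rfl⟩ := hy
      induction hz using Submodule.span_induction with
      | mem z hz =>
        obtain ⟨t, -, rfl⟩ := hz
        rw [← m_add]; exact key _ _ rfl
      | zero => simp
      | add u v _ _ hu hv => rw [mul_add]; exact M.add_mem hu hv
      | smul r u _ hu => rw [mul_smul_comm]; exact M.smul_mem _ hu
    | zero => simp
    | add u v _ _ hu hv => rw [add_mul]; exact M.add_mem hu hv
    | smul r u _ hu => rw [smul_mul_assoc]; exact M.smul_mem _ hu
  have h1 : (1 : S) ∈ M := m_zero ▸ key _ 0 rfl
  refine IsIntegral.of_mem_of_fg (M.toSubalgebra h1 fun y z hy hz => hmul y hy z hz) ?_ _ ?_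
  · simpa using hM
  · change x i₀ ∈ M
    rw [← pow_one (x i₀), ← m_single]
    exact key _ _ rfl

/-- Generic integrality of solutions of `d x = B x^[p] + C`. -/
lemma as_integral.{u, w} {A : Type u} [CommRing A] [IsDomain A] {p : ℕ} [Fact p.Prime] (n : ℕ) :
    ∀ (d : A) (_ : d ≠ 0) (B : Matrix (Fin n) (Fin n) A), ∃ f : A, f ≠ 0 ∧
      ∀ (R S : Type w) [CommRing R] [CommRing S] [Algebra R S] [CharP S p] (φ : A →+* R),
        IsUnit (φ f) → ∀ (x : Fin n → S) (c : Fin n → R),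
        (∀ i, algebraMap R S (φ d) * x i =
          ∑ j, algebraMap R S (φ (B i j)) * x j ^ p + algebraMap R S (c i)) →
        ∀ i, IsIntegral R (x i) := by
  have hp2 : 2 ≤ p := (Fact.out : p.Prime).two_le
  induction n with
  | zero => exact fun d hd B => ⟨1, one_ne_zero, fun R S _ _ _ _ φ _ x c _ i => i.elim0⟩
  | succ n ih =>
    intro d hd B
    by_cases hB : B.det = 0
    · obtain ⟨v, hv, hvB⟩ := Matrix.exists_vecMul_eq_zero_iff.mpr hB
      obtain ⟨i₀, hi₀⟩ : ∃ i, v i ≠ 0 := by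
        by_contra! h; exact hv (funext h)
      obtain ⟨f, hf, H⟩ := ih (v i₀ ^ p * d) (mul_ne_zero (pow_ne_zero _ hi₀) hd)
        (fun i j => v i₀ ^ p * B (i₀.succAbove i) (i₀.succAbove j)
          - B (i₀.succAbove i) i₀ * v (i₀.succAbove j) ^ p)
      refine ⟨f * d * v i₀, mul_ne_zero (mul_ne_zero hf hd) hi₀, ?_⟩
      intro R S _ _ _ _ φ hu x c hx
      rw [map_mul, map_mul, IsUnit.mul_iff, IsUnit.mul_iff] at hu
      obtain ⟨⟨huf, hud⟩, huv⟩ := hu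
      obtain ⟨e, he⟩ := hud.exists_left_inv
      obtain ⟨w, hw⟩ := huv.exists_left_inv
      replace he := congrArg (algebraMap R S) he
      replace hw := congrArg (algebraMap R S) hw
      simp only [map_mul, map_one] at he hw
      let θ : A →+* S := (algebraMap R S).comp φ
      let r : R := e * ∑ i, φ (v i) * c i
      have h1 : θ d * ∑ i, θ (v i) * x i = ∑ i, θ (v i) * algebraMap R S (c i) := by
        have : ∀ i, θ (v i) * (θ d * x i) =
            ∑ j, θ (v i * B i j) * x j ^ p + θ (v i) * algebraMap R S (c i) := by
          intro i
          have := hx i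
          change θ d * x i = ∑ j, θ (B i j) * x j ^ p + _ at this
          rw [this, mul_add, Finset.mul_sum]
          simp [mul_assoc]
        calc _ = ∑ i, θ (v i) * (θ d * x i) := by
              rw [Finset.mul_sum]; exact Finset.sum_congr rfl fun i _ => by ring
          _ = _ := by
              simp_rw [this, Finset.sum_add_distrib]
              rw [Finset.sum_comm]
              simp_rw [← Finset.sum_mul, ← map_sum]
              have : ∀ j, ∑ i, v i * B i j = 0 := fun j => congrFun hvB j
              simp [this]
      have h2 : ∑ i, θ (v i) * x i = algebraMap R S r := by
        have : algebraMap R S r = algebraMap R S e * ∑ i, θ (v i) * algebraMap R S (c i) := by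
          simp [r, θ]
        rw [this, ← h1, ← mul_assoc]
        change _ = (algebraMap R S e * algebraMap R S (φ d)) * _
        rw [he, one_mul]
      rw [Fin.sum_univ_succAbove _ i₀] at h2
      have h3 : θ (v i₀) ^ p * x i₀ ^ p = algebraMap R S r ^ p
          - ∑ j, θ (v (i₀.succAbove j)) ^ p * x (i₀.succAbove j) ^ p := by
        have := congrArg (frobenius S p) h2
        simp only [map_add, map_sum, map_mul, frobenius_def] at this
        rw [← this]; ring
      have hI := H R S φ huf (fun j => x (i₀.succAbove j))
        (fun i => φ (B (i₀.succAbove i) i₀) * r ^ p + φ (v i₀) ^ p * c (i₀.succAbove i)) (by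
          intro i
          have := hx (i₀.succAbove i)
          rw [Fin.sum_univ_succAbove _ i₀] at this
          change θ d * _ = θ _ * _ + ∑ j, θ _ * _ + _ at this
          change θ _ * _ = ∑ j, θ _ * _ + _
          have e1 : ∑ j, θ (v i₀ ^ p * B (i₀.succAbove i) (i₀.succAbove j)
              - B (i₀.succAbove i) i₀ * v (i₀.succAbove j) ^ p) * x (i₀.succAbove j) ^ p
              = θ (v i₀) ^ p * ∑ j, θ (B (i₀.succAbove i) (i₀.succAbove j)) *
                  x (i₀.succAbove j) ^ p
                - θ (B (i₀.succAbove i) i₀) *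
                  ∑ j, θ (v (i₀.succAbove j)) ^ p * x (i₀.succAbove j) ^ p := by
            rw [Finset.mul_sum, Finset.mul_sum, ← Finset.sum_sub_distrib]
            refine Finset.sum_congr rfl fun j _ => ?_
            simp only [map_sub, map_mul, map_pow]; ring
          rw [e1]
          have e2 : algebraMap R S (φ (B (i₀.succAbove i) i₀) * r ^ p
              + φ (v i₀) ^ p * c (i₀.succAbove i)) = θ (B (i₀.succAbove i) i₀) *
                algebraMap R S r ^ p + θ (v i₀) ^ p * algebraMap R S (c (i₀.succAbove i)) := by
            simp [θ]
          rw [e2, map_mul, map_pow]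
          linear_combination θ (v i₀) ^ p * this + θ (B (i₀.succAbove i) i₀) * h3)
      intro i
      rcases Fin.eq_self_or_eq_succAbove i₀ i with rfl | ⟨j, rfl⟩
      · have : x i = algebraMap R S w * (algebraMap R S r
            - ∑ j, θ (v (i.succAbove j)) * x (i.succAbove j)) := by
          rw [← h2]
          have hw' : algebraMap R S w * θ (v i) = 1 := hw
          linear_combination (- x i) * hw'
        rw [this]
        refine isIntegral_algebraMap.mul (isIntegral_algebraMap.sub (IsIntegral.sum _ fun j _ => ?_))
        exact IsIntegral.mul (isIntegral_algebraMap (x := φ _)) (hI j)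
      · exact hI j
    · refine ⟨B.det, hB, ?_⟩
      intro R S _ _ _ _ φ hu x c hx i
      obtain ⟨w, hw⟩ := hu.exists_left_inv
      replace hw := congrArg (algebraMap R S) hw
      simp only [map_mul, map_one] at hw
      let θ : A →+* S := (algebraMap R S).comp φ
      refine as_integral_base hp2 x (fun i j => w * φ (B.adjugate i j * d))
        (fun i => - (w * ∑ j, φ (B.adjugate i j) * c j)) ?_ i
      intro i
      have hadj : ∀ k, ∑ j, B.adjugate i j * B j k = if i = k then B.det else 0 := by
        intro k
        have := congrFun (congrFun (Matrix.adjugate_mul B) i) k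
        rw [Matrix.mul_apply] at this
        rw [this]; simp [Matrix.one_apply]
      have h1 : ∑ j, θ (B.adjugate i j) * (θ d * x j) = θ B.det * x i ^ p
          + ∑ j, θ (B.adjugate i j) * algebraMap R S (c j) := by
        have : ∀ j, θ (B.adjugate i j) * (θ d * x j) = ∑ k, θ (B.adjugate i j * B j k) * x k ^ p
            + θ (B.adjugate i j) * algebraMap R S (c j) := by
          intro j
          have := hx j
          change θ d * _ = ∑ k, θ _ * _ + _ at this
          rw [this, mul_add, Finset.mul_sum]
          simp [mul_assoc]
        simp_rw [this, Finset.sum_add_distrib]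
        rw [Finset.sum_comm]
        simp_rw [← Finset.sum_mul, ← map_sum, hadj]
        simp [apply_ite θ, ite_mul]
      have hw' : algebraMap R S w * θ B.det = 1 := hw
      have e1 : ∑ j, (w * φ (B.adjugate i j * d)) • x j
          = algebraMap R S w * ∑ j, θ (B.adjugate i j) * (θ d * x j) := by
        rw [Finset.mul_sum]
        refine Finset.sum_congr rfl fun j _ => ?_
        simp [Algebra.smul_def, θ, mul_assoc]
      have e2 : algebraMap R S (- (w * ∑ j, φ (B.adjugate i j) * c j))
          = - (algebraMap R S w * ∑ j, θ (B.adjugate i j) * algebraMap R S (c j)) := by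
        simp [θ]
      rw [e1, e2, h1]
      linear_combination (- x i ^ p) * hw'

/-- The Artin–Schreier algebra is étale. -/
lemma as_etale {A : Type*} [CommRing A] {p : ℕ} (hp : p.Prime) (hpA : (p : A) = 0) {n : ℕ}
    (B : Matrix (Fin n) (Fin n) A) (C : Fin n → A) :
    Algebra.Etale A (MvPolynomial (Fin n) A ⧸
            Ideal.span (Set.range fun i : Fin n =>
              MvPolynomial.X i - MvPolynomial.C (C i)
                - ∑ j : Fin n, MvPolynomial.C (B i j) * MvPolynomial.X j ^ p)) := by
  set J := Ideal.span (Set.range fun i : Fin n =>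
              (MvPolynomial.X i - MvPolynomial.C (C i)
                - ∑ j : Fin n, MvPolynomial.C (B i j) * MvPolynomial.X j ^ p :
                MvPolynomial (Fin n) A)) with hJ
  have hfp : Algebra.FinitePresentation A (MvPolynomial (Fin n) A ⧸ J) :=
    Algebra.FinitePresentation.quotient (Submodule.fg_span (Set.finite_range _))
  have rel : ∀ {D : Type _} [CommRing D] [Algebra A D]
      (g : (MvPolynomial (Fin n) A ⧸ J) →ₐ[A] D) (i : Fin n),
      g (Ideal.Quotient.mk J (MvPolynomial.X i)) = algebraMap A D (C i) +
        ∑ j, algebraMap A D (B i j) * g (Ideal.Quotient.mk J (MvPolynomial.X j)) ^ p := by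
    intro D _ _ g i
    have h0 : Ideal.Quotient.mk J (MvPolynomial.X i - MvPolynomial.C (C i)
                - ∑ j : Fin n, MvPolynomial.C (B i j) * MvPolynomial.X j ^ p) = 0 :=
      Ideal.Quotient.eq_zero_iff_mem.mpr (Ideal.subset_span ⟨i, rfl⟩)
    have hC : ∀ a : A, g (Ideal.Quotient.mk J (MvPolynomial.C a)) = algebraMap A D a :=
      fun a => g.commutes a
    have := congrArg g h0
    simp only [map_sub, map_sum, map_mul, map_pow, map_zero, hC] at this
    linear_combination this
  have frob : ∀ {D : Type _} [CommRing D] [Algebra A D] (I : Ideal D), I ^ 2 = ⊥ →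
      ∀ y z : D, y - z ∈ I → y ^ p = z ^ p := by
    intro D _ _ I hI y z hyz
    obtain ⟨r, hr⟩ := exists_add_pow_prime_eq hp z (y - z)
    have hpD : (p : D) = 0 := by rw [← map_natCast (algebraMap A D), hpA, map_zero]
    have h2 : (y - z) ^ 2 = 0 := by
      have := Ideal.pow_mem_pow hyz 2
      rwa [hI, Ideal.mem_bot] at this
    have h3 : (y - z) ^ p = 0 := pow_eq_zero_of_le hp.two_le h2
    rw [h3, hpD] at hr
    simpa using hr
  have hfe : Algebra.FormallyEtale A (MvPolynomial (Fin n) A ⧸ J) := by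
    rw [Algebra.FormallyEtale.iff_comp_bijective]
    intro D _ _ I hI
    constructor
    · intro g₁ g₂ hg
      apply Ideal.Quotient.algHom_ext
      apply MvPolynomial.algHom_ext
      intro i
      change g₁ (Ideal.Quotient.mk J _) = g₂ (Ideal.Quotient.mk J _)
      rw [rel g₁, rel g₂]
      congr 1
      refine Finset.sum_congr rfl fun j _ => ?_
      congr 1
      apply frob I hI
      rw [← Ideal.Quotient.eq]
      exact DFunLike.congr_fun hg _
    · intro g
      choose y hy using fun i => Ideal.Quotient.mk_surjective
        (g (Ideal.Quotient.mk J (MvPolynomial.X i)))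
      let z : Fin n → D := fun i => algebraMap A D (C i) + ∑ j, algebraMap A D (B i j) * y j ^ p
      have hz : ∀ i, Ideal.Quotient.mk I (z i) = g (Ideal.Quotient.mk J (MvPolynomial.X i)) := by
        intro i
        rw [rel g i]
        simp only [z, map_add, map_sum, map_mul, map_pow, hy]
        rfl
      have hzy : ∀ i, z i ^ p = y i ^ p := fun i => frob I hI _ _ (by
        rw [← Ideal.Quotient.eq, hz, hy])
      refine ⟨Ideal.Quotient.liftₐ J (MvPolynomial.aeval z) ?_, ?_⟩
      · intro a ha
        have : J ≤ RingHom.ker (MvPolynomial.aeval (R := A) z) := by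
          rw [hJ, Ideal.span_le]
          rintro _ ⟨i, rfl⟩
          simp only [SetLike.mem_coe, RingHom.mem_ker, map_sub, map_sum, map_mul, map_pow,
            MvPolynomial.aeval_X, MvPolynomial.aeval_C, hzy]
          simp [z]
        exact this ha
      · apply Ideal.Quotient.algHom_ext
        apply MvPolynomial.algHom_ext
        intro i
        change Ideal.Quotient.mk I (MvPolynomial.aeval z (MvPolynomial.X i)) = _
        rw [MvPolynomial.aeval_X]
        exact hz i
  exact ⟨hfe, hfp⟩

/-- Finiteness of the base change to `L` of an algebra `Q` generated by a solution. -/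
lemma as_finite.{u} {A L Q : Type u} [CommRing A] [CommRing L] [CommRing Q] [Algebra A L]
    [Algebra A Q] {p : ℕ} [Fact p.Prime] (hpA : (p : A) = 0) {n : ℕ}
    {B : Matrix (Fin n) (Fin n) A} {f : A}
    (H : ∀ (R S : Type u) [CommRing R] [CommRing S] [Algebra R S] [CharP S p] (φ : A →+* R),
        IsUnit (φ f) → ∀ (x : Fin n → S) (c : Fin n → R),
        (∀ i, algebraMap R S (φ 1) * x i =
          ∑ j, algebraMap R S (φ (B i j)) * x j ^ p + algebraMap R S (c i)) →
        ∀ i, IsIntegral R (x i))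
    (hf : IsUnit (algebraMap A L f)) (x : Fin n → Q) (C : Fin n → A)
    (hgen : Algebra.adjoin A (Set.range x) = ⊤)
    (hx : ∀ i, x i = ∑ j, algebraMap A Q (B i j) * x j ^ p + algebraMap A Q (C i)) :
    Module.Finite L (L ⊗[A] Q) := by
  rcases subsingleton_or_nontrivial (L ⊗[A] Q) with hs | hs
  · infer_instance
  have hpS : (p : L ⊗[A] Q) = 0 := by
    rw [← map_natCast (algebraMap A (L ⊗[A] Q)), hpA, map_zero]
  have : CharP (L ⊗[A] Q) p := (CharP.charP_iff_prime_eq_zero Fact.out).mpr hpS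
  let ι : Q →ₐ[A] L ⊗[A] Q := Algebra.TensorProduct.includeRight
  have hC : ∀ a : A, ι (algebraMap A Q a) = algebraMap L (L ⊗[A] Q) (algebraMap A L a) := by
    intro a
    rw [← IsScalarTower.algebraMap_apply A L (L ⊗[A] Q)]
    exact ι.commutes a
  have hint : ∀ i, IsIntegral L (ι (x i)) := by
    refine H L (L ⊗[A] Q) (algebraMap A L) hf (fun i => ι (x i))
      (fun i => algebraMap A L (C i)) ?_
    intro i
    have := congrArg ι (hx i)
    simp only [map_add, map_sum, map_mul, map_pow, hC] at this
    rw [map_one, map_one, one_mul]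
    exact this
  have hQ : ∀ a : Q, IsIntegral L (ι a) := by
    intro a
    have ha : a ∈ Algebra.adjoin A (Set.range x) := hgen ▸ Algebra.mem_top
    induction ha using Algebra.adjoin_induction with
    | mem a ha => obtain ⟨i, rfl⟩ := ha; exact hint i
    | algebraMap r => rw [hC]; exact isIntegral_algebraMap
    | add a b _ _ ha hb => rw [map_add]; exact ha.add hb
    | mul a b _ _ ha hb => rw [map_mul]; exact ha.mul hb
  have : Algebra.IsIntegral L (L ⊗[A] Q) := by
    refine ⟨fun s => ?_⟩
    induction s using TensorProduct.induction_on with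
    | zero => exact isIntegral_zero
    | add a b ha hb => exact ha.add hb
    | tmul l a =>
      have : l ⊗ₜ[A] a = algebraMap L (L ⊗[A] Q) l * ι a := by
        simp [ι, Algebra.TensorProduct.algebraMap_apply]
      rw [this]
      exact isIntegral_algebraMap.mul (hQ a)
  have : Algebra.FiniteType A Q := by
    refine ⟨hgen ▸ ?_⟩
    exact Subalgebra.fg_def.mpr ⟨_, Set.finite_range x, rfl⟩
  exact Algebra.IsIntegral.finite

/-- The variables generate the Artin–Schreier algebra and satisfy the system. -/
lemma as_gen {A : Type*} [CommRing A] {p n : ℕ}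
    (B : Matrix (Fin n) (Fin n) A) (C : Fin n → A) :
    let J := Ideal.span (Set.range fun i : Fin n =>
              (MvPolynomial.X i - MvPolynomial.C (C i)
                - ∑ j : Fin n, MvPolynomial.C (B i j) * MvPolynomial.X j ^ p :
                MvPolynomial (Fin n) A))
    let x : Fin n → MvPolynomial (Fin n) A ⧸ J :=
      fun i => Ideal.Quotient.mk J (MvPolynomial.X i)
    Algebra.adjoin A (Set.range x) = ⊤ ∧
    ∀ i, x i = ∑ j, algebraMap A (MvPolynomial (Fin n) A ⧸ J) (B i j) * x j ^ p
      + algebraMap A (MvPolynomial (Fin n) A ⧸ J) (C i) := by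
  intro J x
  constructor
  · have hr : Set.range x = (Ideal.Quotient.mkₐ A J) '' Set.range MvPolynomial.X := by
      rw [← Set.range_comp]; rfl
    rw [hr, ← AlgHom.map_adjoin, MvPolynomial.adjoin_range_X, Algebra.map_top,
      AlgHom.range_eq_top]
    exact Ideal.Quotient.mkₐ_surjective A J
  · intro i
    have h0 : Ideal.Quotient.mk J (MvPolynomial.X i - MvPolynomial.C (C i)
                - ∑ j : Fin n, MvPolynomial.C (B i j) * MvPolynomial.X j ^ p) = 0 :=
      Ideal.Quotient.eq_zero_iff_mem.mpr (Ideal.subset_span ⟨i, rfl⟩)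
    simp only [map_sub, map_sum, map_mul, map_pow] at h0
    change x i - algebraMap A (MvPolynomial (Fin n) A ⧸ J) (C i)
      - ∑ j, algebraMap A (MvPolynomial (Fin n) A ⧸ J) (B i j) * x j ^ p = 0 at h0
    linear_combination h0

/-- let `k` be a field of characteristic `p > 0`, `A₀` a `k`-algebra which
is an integral domain, `n ≥ 1` and `B ∈ Mₙ(A₀)`.  Then there is a nonzero `f ∈ A₀`,
depending only on `B` (not on `C`), such that for every `C ∈ A₀ⁿ` the `A₀`-algebra
`A₁ = A₀[x₁,…,xₙ]/(xᵢ - cᵢ - Σⱼ b_{ij} xⱼᵖ)` parametrizing solutions of the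
Artin–Schreier system `x = B·x^{[p]} + C` becomes finite étale over `A₀[1/f]` after
inverting `f`; the localization `A₁[1/f]` is realized as the base change
`A₀[1/f] ⊗_{A₀} A₁`. -/
theorem statement7 (p : ℕ) (hp : p ≠ 0) (k : Type*) [Field k] [CharP k p]
    (A₀ : Type*) [CommRing A₀] [IsDomain A₀] [Algebra k A₀]
    (n : ℕ) (hn : 1 ≤ n) (B : Matrix (Fin n) (Fin n) A₀) :
    ∃ f : A₀, f ≠ 0 ∧
      ∀ C : Fin n → A₀,
        Module.Finite (Localization.Away f)
          (Localization.Away f ⊗[A₀] (MvPolynomial (Fin n) A₀ ⧸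
            Ideal.span (Set.range fun i : Fin n =>
              MvPolynomial.X i - MvPolynomial.C (C i)
                - ∑ j : Fin n, MvPolynomial.C (B i j) * MvPolynomial.X j ^ p))) ∧
        Algebra.Etale (Localization.Away f)
          (Localization.Away f ⊗[A₀] (MvPolynomial (Fin n) A₀ ⧸
            Ideal.span (Set.range fun i : Fin n =>
              MvPolynomial.X i - MvPolynomial.C (C i)
                - ∑ j : Fin n, MvPolynomial.C (B i j) * MvPolynomial.X j ^ p))) := by
  have hprime : p.Prime := (CharP.char_is_prime_or_zero k p).resolve_right hp
  have : Fact p.Prime := ⟨hprime⟩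
  have hpA : (p : A₀) = 0 := by
    rw [← map_natCast (algebraMap k A₀), CharP.cast_eq_zero, map_zero]
  obtain ⟨f, hf, H⟩ := as_integral (p := p) n (1 : A₀) one_ne_zero B
  refine ⟨f, hf, fun C => ?_⟩
  have het := as_etale hprime hpA B C
  set J := Ideal.span (Set.range fun i : Fin n =>
              (MvPolynomial.X i - MvPolynomial.C (C i)
                - ∑ j : Fin n, MvPolynomial.C (B i j) * MvPolynomial.X j ^ p :
                MvPolynomial (Fin n) A₀)) with hJ
  have het' : Algebra.Etale (Localization.Away f)
      (Localization.Away f ⊗[A₀] (MvPolynomial (Fin n) A₀ ⧸ J)) := inferInstance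
  refine ⟨?_, het'⟩
  obtain ⟨hgen, hrel⟩ := as_gen (p := p) B C
  exact as_finite hpA H (IsLocalization.Away.algebraMap_isUnit f)
    (fun i => Ideal.Quotient.mk J (MvPolynomial.X i)) C hgen hrel
end

section
/- Let k be a field of characteristic p > 0, let A₀ be a k-algebra which is an integral domain, and let b, c ∈ A₀ with b ≠ 0. Then the A₀-algebra A₁ := A₀[x]/(x − c − b·xᵖ) is étale over A₀, and the localization A₁[1/b] is a finite free A₀[1/b]-module of rank p (since after inverting b the defining equation becomes the monic equation xᵖ = b⁻¹x − b⁻¹c). -/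
open TensorProduct

set_option maxHeartbeats 1000000

open Polynomial in
theorem liftAlgHom_root_aux {R S : Type*} [CommRing R] [CommRing S] [Algebra R S] (f : R[X])
    (x : S) (h : aeval x f = 0) :
    AdjoinRoot.liftAlgHom f (Algebra.ofId R S) x h (AdjoinRoot.root f) = x :=
  AdjoinRoot.lift_root h

open Polynomial in
theorem etale_of_derivative_one {R : Type*} [CommRing R] (f : R[X]) (hf : derivative f = 1) :
    Algebra.Etale R (AdjoinRoot f) := by
  have h1 : Algebra.FormallyEtale R (AdjoinRoot f) := by
    refine Algebra.FormallyEtale.iff_comp_bijective.mpr fun S _ _ I hI ↦ ⟨?_, ?_⟩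
    · intro φ ψ h
      apply AdjoinRoot.algHom_ext
      have hr := DFunLike.congr_fun h (AdjoinRoot.root f)
      simp only [AlgHom.comp_apply, Ideal.Quotient.mkₐ_eq_mk,
        Ideal.Quotient.mk_eq_mk_iff_sub_mem] at hr
      have h2 := aeval_add_of_sq_eq_zero f (ψ (AdjoinRoot.root f))
        (φ (AdjoinRoot.root f) - ψ (AdjoinRoot.root f)) (hI.le (Ideal.pow_mem_pow hr 2))
      rw [add_sub_cancel, aeval_algHom_apply, aeval_algHom_apply, AdjoinRoot.aeval_eq,
        AdjoinRoot.mk_self, hf] at h2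
      simp only [map_zero, map_one, one_mul, zero_add] at h2
      exact sub_eq_zero.mp h2.symm
    · intro φ
      obtain ⟨x, hx⟩ := Ideal.Quotient.mk_surjective (φ (AdjoinRoot.root f))
      have hm : aeval x f ∈ I := by
        rw [← Ideal.Quotient.eq_zero_iff_mem, ← Ideal.Quotient.mkₐ_eq_mk R,
          ← aeval_algHom_apply, Ideal.Quotient.mkₐ_eq_mk, hx, aeval_algHom_apply,
          AdjoinRoot.aeval_eq, AdjoinRoot.mk_self, map_zero]
      have h0 : aeval (x + -aeval x f) f = 0 := by
        rw [aeval_add_of_sq_eq_zero f x _ (hI.le (Ideal.pow_mem_pow (I.neg_mem hm) 2)), hf]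
        simp
      refine ⟨AdjoinRoot.liftAlgHom f (Algebra.ofId R S) (x + -aeval x f) h0, ?_⟩
      apply AdjoinRoot.algHom_ext
      simp [liftAlgHom_root_aux, hx, Ideal.Quotient.eq_zero_iff_mem.mpr hm]
  have h2 : Algebra.FinitePresentation R (AdjoinRoot f) :=
    Algebra.FinitePresentation.quotient (Submodule.fg_span (by simp))
  exact { }

open Polynomial in
theorem nonempty_baseChange_adjoinRoot {R T : Type*} [CommRing R] [CommRing T] [Algebra R T]
    (f : R[X]) (m : T[X]) (h1 : m ∣ f.map (algebraMap R T)) (h2 : f.map (algebraMap R T) ∣ m) :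
    Nonempty ((T ⊗[R] AdjoinRoot f) ≃ₐ[T] AdjoinRoot m) := by
  have e1 : aeval (AdjoinRoot.root m) f = 0 := by
    rw [← aeval_map_algebraMap T, AdjoinRoot.aeval_eq, AdjoinRoot.mk_eq_zero]
    exact h1
  have e2 : aeval ((1 : T) ⊗ₜ[R] AdjoinRoot.root f) m = 0 := by
    obtain ⟨q, rfl⟩ := h2
    have : (1 : T) ⊗ₜ[R] AdjoinRoot.root f =
      (Algebra.TensorProduct.includeRight : _ →ₐ[R] T ⊗[R] AdjoinRoot f)
        (AdjoinRoot.root f) := rfl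
    rw [map_mul, aeval_map_algebraMap, this, aeval_algHom_apply, AdjoinRoot.aeval_eq,
      AdjoinRoot.mk_self, map_zero, zero_mul]
  refine ⟨AlgEquiv.ofAlgHom
    (Algebra.TensorProduct.lift (Algebra.ofId T _)
      (AdjoinRoot.liftAlgHom f (Algebra.ofId R _) (AdjoinRoot.root m) e1)
      (fun _ _ ↦ Commute.all _ _))
    (AdjoinRoot.liftAlgHom m (Algebra.ofId T _) ((1 : T) ⊗ₜ[R] AdjoinRoot.root f) e2) ?_ ?_⟩
  · apply AdjoinRoot.algHom_ext
    simp [liftAlgHom_root_aux]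
  · apply Algebra.TensorProduct.ext
    · ext
    · apply AdjoinRoot.algHom_ext
      simp [liftAlgHom_root_aux]

/-- let `k` be a field of characteristic `p > 0`, `A₀` a `k`-algebra which
is an integral domain, and `b, c ∈ A₀` with `b ≠ 0`.  Then `A₁ = A₀[x]/(x - c - b·xᵖ)`
is étale over `A₀`, and `A₁[1/b]` (realized as the base change `A₀[1/b] ⊗_{A₀} A₁`) is
a finite free `A₀[1/b]`-module of rank `p`. -/
theorem statement9 (p : ℕ) (hp : p ≠ 0) (k : Type*) [Field k] [CharP k p]
    (A₀ : Type*) [CommRing A₀] [IsDomain A₀] [Algebra k A₀]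
    (b c : A₀) (hb : b ≠ 0) :
    Algebra.Etale A₀ (Polynomial A₀ ⧸
      Ideal.span {Polynomial.X - Polynomial.C c - Polynomial.C b * Polynomial.X ^ p}) ∧
    Module.Finite (Localization.Away b)
      (Localization.Away b ⊗[A₀] (Polynomial A₀ ⧸
        Ideal.span {Polynomial.X - Polynomial.C c - Polynomial.C b * Polynomial.X ^ p})) ∧
    Module.Free (Localization.Away b)
      (Localization.Away b ⊗[A₀] (Polynomial A₀ ⧸
        Ideal.span {Polynomial.X - Polynomial.C c - Polynomial.C b * Polynomial.X ^ p})) ∧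
    Module.finrank (Localization.Away b)
      (Localization.Away b ⊗[A₀] (Polynomial A₀ ⧸
        Ideal.span {Polynomial.X - Polynomial.C c - Polynomial.C b * Polynomial.X ^ p})) = p := by
  have hpp : p.Prime := (CharP.char_is_prime_or_zero k p).resolve_right hp
  have hpA : (p : A₀) = 0 := by
    rw [← map_natCast (algebraMap k A₀), CharP.cast_eq_zero, map_zero]
  have hpP : (p : Polynomial A₀) = 0 := by
    rw [← map_natCast (Polynomial.C : A₀ →+* _), hpA, map_zero]
  refine ⟨etale_of_derivative_one _ (by simp [Polynomial.derivative_X_pow, hpA]), ?_⟩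
  have hunit : IsUnit (algebraMap A₀ (Localization.Away b) b) :=
    IsLocalization.Away.algebraMap_isUnit b
  have : Nontrivial (Localization.Away b) :=
    (IsLocalization.injective (Localization.Away b)
      (powers_le_nonZeroDivisors_of_noZeroDivisors hb)).nontrivial
  obtain ⟨u, hu⟩ := hunit.exists_left_inv
  set β := algebraMap A₀ (Localization.Away b) b with hβ
  set γ := algebraMap A₀ (Localization.Away b) c with hγ
  let r : Polynomial (Localization.Away b) :=
    Polynomial.C (-u) * Polynomial.X + Polynomial.C (u * γ)
  let m := Polynomial.X ^ p + r
  have hr : r.degree < p := lt_of_le_of_lt Polynomial.degree_linear_le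
    (by exact_mod_cast hpp.one_lt)
  have hm : m.Monic := Polynomial.monic_X_pow_add hr
  have hdeg : m.natDegree = p := by
    apply Polynomial.natDegree_eq_of_degree_eq_some
    rw [Polynomial.degree_add_eq_left_of_degree_lt] <;> rw [Polynomial.degree_X_pow]
    exact hr
  have hC : Polynomial.C u * Polynomial.C β = 1 := by rw [← Polynomial.C_mul, hu, Polynomial.C_1]
  have hmap : (Polynomial.X - Polynomial.C c - Polynomial.C b * Polynomial.X ^ p).map
      (algebraMap A₀ (Localization.Away b)) =
      Polynomial.X - Polynomial.C γ - Polynomial.C β * Polynomial.X ^ p := by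
    simp [hβ, hγ]
  obtain ⟨e⟩ := nonempty_baseChange_adjoinRoot (T := Localization.Away b)
    (Polynomial.X - Polynomial.C c - Polynomial.C b * Polynomial.X ^ p) m
    ⟨-Polynomial.C β, by
      rw [hmap]; simp only [m, r, Polynomial.C_neg, Polynomial.C_mul]
      linear_combination (Polynomial.C γ - Polynomial.X) * hC⟩
    ⟨-Polynomial.C u, by
      rw [hmap]; simp only [m, r, Polynomial.C_neg, Polynomial.C_mul]
      linear_combination -Polynomial.X ^ p * hC⟩
  have hfin := hm.finite_adjoinRoot
  have hfree := hm.free_adjoinRoot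
  refine ⟨Module.Finite.equiv e.symm.toLinearEquiv, Module.Free.of_equiv e.symm.toLinearEquiv, ?_⟩
  refine e.toLinearEquiv.finrank_eq.trans ?_
  rw [(AdjoinRoot.powerBasis' hm).finrank, AdjoinRoot.powerBasis'_dim, hdeg]
end
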